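/- Assume (H₁) and (H₂) hold and that 2·l_K²·(l_G·√(l_G²+η_G²) + l_G² + η_G²) < η_G². Then for every fixed s ∈ I and every fixed x ∈ H₁ there exists a unique u ∈ Ω such that u ∈ K(u) and ⟨G(s,x,u), v − u⟩ ≥ 0 for all v ∈ K(u). -/

import Mathlib

/-!
The theorem rests on two facts about the variational inequality
`u ∈ C`, `⟪g u, v - u⟫ ≥ 0` for all `v ∈ C`, where `g` is Lipschitz and strongly pseudomonotone.

*Solvability on a fixed set* (`exists_vi_solution`). A point `p ∈ C` solves the inequality as soon
as it solves the Minty form `η ‖v - p‖² ≤ ⟪g v, v - p⟫` for all `v ∈ C`. Completing the square, the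
condition attached to one `v` says that `p` lies in a closed ball `mintyBall`. Strong
pseudomonotonicity makes these balls a KKM family: the convex hull of finitely many points of `C`
is covered by the balls attached to them. Because the balls are convex, the KKM principle needs no
Brouwer theorem: it follows from Klee's intersection theorem (`klee_inter`), whose proof
only uses separation by a hyperplane. So finitely many balls always meet, and a common point
of all of them exists because bounded closed convex sets in a Hilbert space have the finite
intersection property (`bounded_convex_fip`).

*Dependence on the set* (`solution_lipschitz`). Let `u₁`, `u₂` solve the inequality on `K w₁`,
`K w₂`. For every `ε > 0`, `u₂` is the projection of `u₂ - ε⁻¹ g u₂` onto `K w₂`; projecting the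
same point onto `K w₁` gives `z ∈ K w₁` with `‖z - u₂‖ ≤ l_K ‖w₁ - w₂‖`, and comparing `z` with `u₁`
inside `K w₁` gives `η ‖z - u₁‖ ≤ (l + ε) ‖z - u₂‖`. Hence
`η ‖u₁ - u₂‖ ≤ (η + l + ε) l_K ‖w₁ - w₂‖`. The smallness condition implies `l_K (η + l) < η`, since
`(η + l)² ≤ 2 (l² + η²)`, so for small `ε` the solution map `w ↦ u` is a contraction of the
complete set `Ω`; its fixed points are exactly the solutions sought.
-/

open scoped RealInnerProductSpace
open Set

/-- Metric projection onto a set `C` of a real Hilbert space, characterized by the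
variational inequality `⟪w - x, v - w⟫ ≥ 0` for all `v ∈ C`. -/
noncomputable def proj {H : Type*} [NormedAddCommGroup H] [InnerProductSpace ℝ H]
    (C : Set H) (x : H) : H :=
  letI : Nonempty H := ⟨0⟩
  Classical.epsilon fun w => w ∈ C ∧ ∀ v ∈ C, 0 ≤ ⟪w - x, v - w⟫

section Projection

variable {H : Type*} [NormedAddCommGroup H] [InnerProductSpace ℝ H]

lemma proj_spec [CompleteSpace H] {C : Set H} (hne : C.Nonempty) (hcl : IsClosed C)
    (hcv : Convex ℝ C) (x : H) : proj C x ∈ C ∧ ∀ v ∈ C, 0 ≤ ⟪proj C x - x, v - proj C x⟫ := by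
  have h : ∃ w, w ∈ C ∧ ∀ v ∈ C, 0 ≤ ⟪w - x, v - w⟫ := by
    obtain ⟨w, hw, hmin⟩ := exists_norm_eq_iInf_of_complete_convex hne hcl.isComplete hcv x
    refine ⟨w, hw, fun v hv => ?_⟩
    have h1 := (norm_eq_iInf_iff_real_inner_le_zero hcv hw).1 hmin v hv
    rw [← neg_sub w x, inner_neg_left] at h1
    linarith
  exact Classical.epsilon_spec h

lemma proj_eq [CompleteSpace H] {C : Set H} (hcl : IsClosed C) (hcv : Convex ℝ C) {x w : H}
    (hw : w ∈ C) (hvi : ∀ v ∈ C, 0 ≤ ⟪w - x, v - w⟫) : proj C x = w := by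
  obtain ⟨hp, hpv⟩ := proj_spec ⟨w, hw⟩ hcl hcv x
  have h1 := hvi _ hp
  have h2 := hpv _ hw
  have h3 : ⟪w - x, proj C x - w⟫ + ⟪proj C x - x, w - proj C x⟫ = -‖proj C x - w‖ ^ 2 := by
    rw [← real_inner_self_eq_norm_sq]
    simp only [inner_sub_left, inner_sub_right]
    ring
  have h4 : ‖proj C x - w‖ = 0 := by
    have : ‖proj C x - w‖ ^ 2 ≤ 0 := by linarith
    exact pow_eq_zero_iff (two_ne_zero) |>.1 (le_antisymm this (sq_nonneg _))
  exact sub_eq_zero.1 (norm_eq_zero.1 h4)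

/-- The finite intersection property for closed convex sets, one of which is bounded. The
minimal-norm points of the finite intersections have increasing, bounded norms, so they form a
Cauchy net, and the limit lies in every set. -/
lemma bounded_convex_fip [CompleteSpace H] {ι : Type*} {B : Set H} {M : ι → Set H}
    (hBb : Bornology.IsBounded B) (hBcl : IsClosed B) (hBcv : Convex ℝ B)
    (hMcl : ∀ i, IsClosed (M i)) (hMcv : ∀ i, Convex ℝ (M i))
    (hne : ∀ F : Finset ι, (B ∩ ⋂ i ∈ F, M i).Nonempty) : ∃ p ∈ B, ∀ i, p ∈ M i := by
  classical
  set A : Finset ι → Set H := fun F => B ∩ ⋂ i ∈ F, M i with hA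
  have hAcl : ∀ F, IsClosed (A F) := fun F =>
    hBcl.inter (isClosed_biInter fun i _ => hMcl i)
  have hAcv : ∀ F, Convex ℝ (A F) := fun F =>
    hBcv.inter (convex_iInter₂ fun i _ => hMcv i)
  have hmono : ∀ F F', F ≤ F' → A F' ⊆ A F := fun F F' h =>
    inter_subset_inter_right _ (biInter_subset_biInter_left fun i hi => h hi)
  set p : Finset ι → H := fun F => proj (A F) 0
  have hp : ∀ F, p F ∈ A F ∧ ∀ v ∈ A F, 0 ≤ ⟪p F - 0, v - p F⟫ := fun F =>
    proj_spec (hne F) (hAcl F) (hAcv F) 0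
  have key : ∀ F F', F ≤ F' → ‖p F' - p F‖ ^ 2 ≤ ‖p F'‖ ^ 2 - ‖p F‖ ^ 2 := by
    intro F F' h
    have h1 := (hp F).2 _ (hmono F F' h (hp F').1)
    rw [sub_zero, inner_sub_right, real_inner_self_eq_norm_sq] at h1
    rw [norm_sub_sq_real, real_inner_comm]
    linarith
  obtain ⟨R, hR⟩ := hBb.exists_norm_le
  have hbdd : BddAbove (range fun F => ‖p F‖ ^ 2) := by
    refine ⟨R ^ 2, ?_⟩
    rintro _ ⟨F, rfl⟩
    exact pow_le_pow_left₀ (norm_nonneg _) (hR _ (hp F).1.1) 2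
  have hcau : CauchySeq p := by
    refine Metric.cauchySeq_iff'.2 fun ε hε => ?_
    obtain ⟨N, hN⟩ := exists_lt_of_lt_ciSup
      (show (⨆ F, ‖p F‖ ^ 2) - ε ^ 2 < ⨆ F, ‖p F‖ ^ 2 by linarith [pow_pos hε 2])
    refine ⟨N, fun n hn => ?_⟩
    have h1 := key N n hn
    have h2 : ‖p n‖ ^ 2 ≤ ⨆ F, ‖p F‖ ^ 2 := le_ciSup hbdd n
    rw [dist_eq_norm]
    exact lt_of_pow_lt_pow_left₀ 2 hε.le (by linarith)
  obtain ⟨a, ha⟩ := cauchySeq_tendsto_of_complete hcau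
  have hmem : ∀ F, a ∈ A F := fun F =>
    (hAcl F).mem_of_tendsto ha <| (Filter.eventually_ge_atTop F).mono fun F' h =>
      hmono F F' h (hp F').1
  refine ⟨a, (hmem ∅).1, fun i => ?_⟩
  have := (hmem {i}).2
  simpa using this

end Projection

section KKM

variable {H : Type*} [NormedAddCommGroup H] [InnerProductSpace ℝ H]

/-- Klee's intersection theorem: if closed convex sets cover a nonempty compact convex set `X`
and all but any one of them have a common point in `X`, then all of them do. If the last set `C k`
missed the intersection of the others, a separating hyperplane would carry a counterexample with
one set fewer. -/
lemma klee_inter {ι : Type*} [DecidableEq ι] (J : Finset ι) (C : ι → Set H)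
    (hCcl : ∀ i, IsClosed (C i)) (hCcv : ∀ i, Convex ℝ (C i)) :
    ∀ X : Set H, IsCompact X → Convex ℝ X → X.Nonempty → (X ⊆ ⋃ i ∈ J, C i) →
      (∀ k ∈ J, ∃ y ∈ X, ∀ i ∈ J.erase k, y ∈ C i) → ∃ y ∈ X, ∀ i ∈ J, y ∈ C i := by
  induction J using Finset.induction_on with
  | empty =>
    intro X _ _ hne hcov _
    obtain ⟨y, hy⟩ := hne
    simpa using hcov hy
  | insert k J hk ih =>
    intro X hX hXcv hne hcov hint
    by_contra! hcon
    set D : Set H := X ∩ ⋂ i ∈ J, C i with hD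
    have hDk : Disjoint D (C k) := by
      rw [Set.disjoint_left]
      rintro y ⟨hyX, hyJ⟩ hyk
      obtain ⟨i, hi, hyi⟩ := hcon y hyX
      rcases Finset.mem_insert.1 hi with rfl | hi
      · exact hyi hyk
      · exact hyi (mem_iInter₂.1 hyJ i hi)
    obtain ⟨d, hdX, hdJ⟩ := hint k (Finset.mem_insert_self _ _)
    rw [Finset.erase_insert hk] at hdJ
    have hdD : d ∈ D := ⟨hdX, mem_iInter₂.2 hdJ⟩
    obtain ⟨f, u, v, hfu, huv, hfv⟩ := geometric_hahn_banach_compact_closed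
      (hXcv.inter (convex_iInter₂ fun i _ => hCcv i))
      (hX.inter_right (isClosed_biInter fun i _ => hCcl i)) (hCcv k) (hCcl k) hDk
    -- A segment from `d` to a point of `C k` crosses the hyperplane `f = u`.
    have hcross : ∀ b ∈ C k, ∃ y ∈ segment ℝ d b, f y = u := by
      intro b hb
      have h1 : (segment ℝ d b).Nonempty := ⟨d, left_mem_segment ℝ d b⟩
      have h2 := (convex_segment (𝕜 := ℝ) d b).isPreconnected.intermediate_value
        (left_mem_segment ℝ d b) (right_mem_segment ℝ d b) f.continuous.continuousOn
      obtain ⟨y, hy, hfy⟩ := h2 ⟨(hfu d hdD).le, (huv.trans (hfv b hb)).le⟩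
      exact ⟨y, hy, hfy⟩
    have hsub : ∀ y ∈ X ∩ {y | f y = u}, y ∉ C k := fun y hy hyk =>
      absurd (hfv y hyk) (by rw [hy.2]; exact huv.not_gt)
    have hstep : ∀ j ∈ J, ∃ y ∈ X ∩ {y | f y = u}, ∀ i ∈ J.erase j, y ∈ C i := by
      intro j hj
      obtain ⟨b, hbX, hb⟩ := hint j (Finset.mem_insert_of_mem hj)
      have hkj : k ≠ j := fun h => hk (h ▸ hj)
      obtain ⟨y, hy, hfy⟩ := hcross b
        (hb k (Finset.mem_erase.2 ⟨hkj, Finset.mem_insert_self _ _⟩))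
      refine ⟨y, ⟨hXcv.segment_subset hdX hbX hy, hfy⟩, fun i hi => ?_⟩
      obtain ⟨hij, hiJ⟩ := Finset.mem_erase.1 hi
      exact (hCcv i).segment_subset (hdJ i hiJ)
        (hb i (Finset.mem_erase.2 ⟨hij, Finset.mem_insert_of_mem hiJ⟩)) hy
    have hne' : (X ∩ {y | f y = u}).Nonempty := by
      rcases J.eq_empty_or_nonempty with rfl | ⟨j, hj⟩
      · have : d ∈ C k := by simpa using hcov hdX
        exact absurd this (Set.disjoint_left.1 hDk hdD)
      · obtain ⟨y, hy, _⟩ := hstep j hj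
        exact ⟨y, hy⟩
    obtain ⟨y, hy, hyJ⟩ := ih (X ∩ {y | f y = u})
      (hX.inter_right (isClosed_eq f.continuous continuous_const))
      (hXcv.inter (convex_hyperplane f.toLinearMap.isLinear u)) hne'
      (fun y hy => by
        obtain ⟨i, hi, hyi⟩ := mem_iUnion₂.1 (hcov hy.1)
        rcases Finset.mem_insert.1 hi with rfl | hi
        · exact absurd hyi (hsub y hy)
        · exact mem_iUnion₂.2 ⟨i, hi, hyi⟩) hstep
    have := hfu y ⟨hy.1, mem_iInter₂.2 hyJ⟩
    exact absurd hy.2 this.ne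

/-- The Knaster–Kuratowski–Mazurkiewicz principle for closed convex values. -/
lemma convex_kkm (M : H → Set H) (hMcl : ∀ v, IsClosed (M v)) (hMcv : ∀ v, Convex ℝ (M v))
    (F : Finset H) (hF : F.Nonempty)
    (hcov : ∀ J ⊆ F, convexHull ℝ (J : Set H) ⊆ ⋃ v ∈ J, M v) :
    ∃ y ∈ convexHull ℝ (F : Set H), ∀ v ∈ F, y ∈ M v := by
  classical
  induction F using Finset.strongInduction with
  | H F ih =>
    have hne : (convexHull ℝ (F : Set H)).Nonempty := (Finset.coe_nonempty.2 hF).convexHull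
    refine klee_inter F M hMcl hMcv _ (F.finite_toSet.isCompact_convexHull ℝ)
      (convex_convexHull ℝ _) hne (hcov F subset_rfl) fun k hk => ?_
    rcases (F.erase k).eq_empty_or_nonempty with he | he
    · obtain ⟨y, hy⟩ := hne
      exact ⟨y, hy, by simp [he]⟩
    · obtain ⟨y, hy, hyM⟩ := ih _ (Finset.erase_ssubset hk) he
        fun J hJ => hcov J (hJ.trans (Finset.erase_subset _ _))
      exact ⟨y, convexHull_mono (Finset.coe_subset.2 (Finset.erase_subset _ _)) hy, hyM⟩

end KKM

section VariationalInequality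

variable {H : Type*} [NormedAddCommGroup H] [InnerProductSpace ℝ H]

/-- The set of `u` satisfying the strong Minty inequality `η ‖v - u‖² ≤ ⟪g v, v - u⟫` at the
test point `v`, written as a ball by completing the square. -/
def mintyBall (g : H → H) (η : ℝ) (v : H) : Set H :=
  Metric.closedBall (v - (2 * η)⁻¹ • g v) ‖(2 * η)⁻¹ • g v‖

lemma mem_mintyBall {g : H → H} {η : ℝ} (hη : 0 < η) {v u : H} :
    u ∈ mintyBall g η v ↔ η * ‖v - u‖ ^ 2 ≤ ⟪g v, v - u⟫ := by
  have h : ‖u - (v - (2 * η)⁻¹ • g v)‖ ^ 2 =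
      ‖(2 * η)⁻¹ • g v‖ ^ 2 + η⁻¹ * (η * ‖v - u‖ ^ 2 - ⟪g v, v - u⟫) := by
    have : u - (v - (2 * η)⁻¹ • g v) = (2 * η)⁻¹ • g v - (v - u) := by abel
    rw [this, norm_sub_sq_real, real_inner_smul_left]
    field_simp
    ring
  rw [mintyBall, mem_closedBall_iff_norm, ← sq_le_sq₀ (norm_nonneg _) (norm_nonneg _), h]
  constructor
  · intro h1
    by_contra! h2
    have := mul_pos (inv_pos.2 hη) (sub_pos.2 h2)
    linarith
  · intro h1
    have := mul_nonneg (inv_pos.2 hη).le (sub_nonneg.2 h1)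
    linarith

/-- A Lipschitz, strongly pseudomonotone variational inequality on a nonempty closed convex set has
a solution. -/
lemma exists_vi_solution [CompleteSpace H] {C : Set H} (hne : C.Nonempty) (hcl : IsClosed C)
    (hcv : Convex ℝ C) (g : H → H) {l η : ℝ} (hl : 0 < l) (hη : 0 < η)
    (hLip : ∀ u ∈ C, ∀ v ∈ C, ‖g v - g u‖ ≤ l * ‖v - u‖)
    (hpm : ∀ u ∈ C, ∀ v ∈ C, 0 ≤ ⟪g v, u - v⟫ → η * ‖u - v‖ ^ 2 ≤ ⟪g u, u - v⟫) :
    ∃ u ∈ C, ∀ v ∈ C, 0 ≤ ⟪g u, v - u⟫ := by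
  classical
  have hfin : ∀ F : Finset H, F.Nonempty → (F : Set H) ⊆ C →
      ∃ y ∈ C, ∀ v ∈ F, y ∈ mintyBall g η v := by
    intro F hF hFC
    obtain ⟨y, hy, hyM⟩ := convex_kkm (mintyBall g η) (fun v => Metric.isClosed_closedBall)
      (fun v => convex_closedBall _ _) F hF (by
        intro J hJ u hu
        by_contra hcon
        have huC : u ∈ C := convexHull_min ((Finset.coe_subset.2 hJ).trans hFC) hcv hu
        -- Outside all the balls, every point of `J` lies in the open half-space
        -- `⟪g u, · - u⟫ < 0`, and therefore so would `u` itself.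
        have hJs : (J : Set H) ⊆ {z | ⟪g u, z⟫ < ⟪g u, u⟫} := by
          intro v hv
          by_contra hv'
          refine hcon (mem_iUnion₂.2 ⟨v, hv, (mem_mintyBall hη).2 ?_⟩)
          refine hpm v (hFC (hJ hv)) u huC ?_
          rw [inner_sub_right]
          exact sub_nonneg.2 (not_lt.1 hv')
        have := convexHull_min hJs
          (convex_halfSpace_lt (innerₗ H (g u)).isLinear _) hu
        exact lt_irrefl ⟪g u, u⟫ this)
    exact ⟨y, convexHull_min hFC hcv hy, hyM⟩
  obtain ⟨v₀, hv₀⟩ := hne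
  obtain ⟨p, hp, hpM⟩ := bounded_convex_fip (B := C ∩ mintyBall g η v₀)
    (M := fun v : C => mintyBall g η (v : H))
    (Metric.isBounded_closedBall.subset inter_subset_right)
    (hcl.inter Metric.isClosed_closedBall) (hcv.inter (convex_closedBall _ _))
    (fun _ => Metric.isClosed_closedBall) (fun _ => convex_closedBall _ _) (by
      intro F
      obtain ⟨y, hy, hyM⟩ := hfin (insert v₀ (F.image Subtype.val)) (Finset.insert_nonempty _ _)
        (by
          intro z hz
          rcases Finset.mem_insert.1 (Finset.mem_coe.1 hz) with rfl | hz
          · exact hv₀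
          · obtain ⟨w, _, rfl⟩ := Finset.mem_image.1 hz
            exact w.2)
      exact ⟨y, ⟨hy, hyM _ (Finset.mem_insert_self _ _)⟩, mem_iInter₂.2 fun i hi =>
        hyM _ (Finset.mem_insert_of_mem (Finset.mem_image_of_mem _ hi))⟩)
  -- Minty's argument: test at `p + t (v - p)` and let `t` tend to `0`.
  refine ⟨p, hp.1, fun v hv => ?_⟩
  have ht : ∀ t : ℝ, 0 < t → t ≤ 1 → -(t * (l * ‖v - p‖ ^ 2)) ≤ ⟪g p, v - p⟫ := by
    intro t ht0 ht1
    have hz : p + t • (v - p) ∈ C := hcv.add_smul_sub_mem hp.1 hv ⟨ht0.le, ht1⟩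
    set z := p + t • (v - p) with hzdef
    have hzp : z - p = t • (v - p) := by rw [hzdef]; abel
    have h1 := (mem_mintyBall hη).1 (hpM ⟨z, hz⟩)
    simp only [hzp, real_inner_smul_right] at h1
    have h2 : 0 ≤ ⟪g z, v - p⟫ := by
      refine nonneg_of_mul_nonneg_right (le_trans ?_ h1) ht0
      positivity
    have h3 : ⟪g z - g p, v - p⟫ ≤ l * ‖z - p‖ * ‖v - p‖ :=
      (real_inner_le_norm _ _).trans
        (mul_le_mul_of_nonneg_right (hLip p hp.1 z hz) (norm_nonneg _))
    rw [hzp, norm_smul, Real.norm_of_nonneg ht0.le, inner_sub_left] at h3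
    nlinarith
  by_contra! hneg
  set a := ⟪g p, v - p⟫
  set b := l * ‖v - p‖ ^ 2
  have hb : 0 ≤ b := by positivity
  -- With this step the lower bound `-(t b)` is still larger than `a`.
  have h1 := ht (-a / (b - a)) (div_pos (by linarith) (by linarith))
    ((div_le_one (by linarith)).2 (by linarith))
  have h2 : -a / (b - a) * b < -a := by
    rw [div_mul_eq_mul_div, div_lt_iff₀ (by linarith)]
    nlinarith
  linarith

/-- Lipschitz estimate between the solutions `u₁` on `C₁` and `u₂` on `C₂`, in terms of a
uniform bound `δ` on the distance between the projections of a point onto the two sets. -/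
lemma solution_lipschitz [CompleteSpace H] {C₁ C₂ : Set H} (hcl₁ : IsClosed C₁)
    (hcv₁ : Convex ℝ C₁) (hcl₂ : IsClosed C₂) (hcv₂ : Convex ℝ C₂) (g : H → H) {l η ε δ : ℝ}
    (hl : 0 < l) (hη : 0 < η) (hε : 0 < ε)
    (hLip : ∀ u ∈ C₂, ∀ v ∈ C₁, ‖g v - g u‖ ≤ l * ‖v - u‖)
    (hpm : ∀ u ∈ C₁, ∀ v ∈ C₁, 0 ≤ ⟪g v, u - v⟫ → η * ‖u - v‖ ^ 2 ≤ ⟪g u, u - v⟫)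
    (hδ : ∀ y, ‖proj C₂ y - proj C₁ y‖ ≤ δ)
    {u₁ u₂ : H} (hu₁ : u₁ ∈ C₁) (hvi₁ : ∀ v ∈ C₁, 0 ≤ ⟪g u₁, v - u₁⟫)
    (hu₂ : u₂ ∈ C₂) (hvi₂ : ∀ v ∈ C₂, 0 ≤ ⟪g u₂, v - u₂⟫) :
    η * ‖u₁ - u₂‖ ≤ (η + l + ε) * δ := by
  set y := u₂ - ε⁻¹ • g u₂ with hy
  have hp2 : proj C₂ y = u₂ := by
    refine proj_eq hcl₂ hcv₂ hu₂ fun v hv => ?_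
    rw [hy, sub_sub_cancel, real_inner_smul_left]
    exact mul_nonneg (inv_pos.2 hε).le (hvi₂ v hv)
  obtain ⟨hz, hzv⟩ := proj_spec ⟨u₁, hu₁⟩ hcl₁ hcv₁ y
  have hzδ := hδ y
  rw [hp2] at hzδ
  set z := proj C₁ y
  have h1 := hpm z hz u₁ hu₁ (hvi₁ z hz)
  have h2 : 0 ≤ ⟪ε • (z - u₂) + g u₂, u₁ - z⟫ := by
    have h := mul_nonneg hε.le (hzv u₁ hu₁)
    have h' : ε • (z - y) = ε • (z - u₂) + g u₂ := by
      rw [hy, ← sub_add, smul_add, smul_inv_smul₀ hε.ne']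
    rwa [← real_inner_smul_left, h'] at h
  have h3 : ⟪g z - g u₂, z - u₁⟫ ≤ l * ‖z - u₂‖ * ‖z - u₁‖ :=
    (real_inner_le_norm _ _).trans
      (mul_le_mul_of_nonneg_right (hLip u₂ hu₂ z hz) (norm_nonneg _))
  have h4 : -⟪z - u₂, z - u₁⟫ ≤ ‖z - u₂‖ * ‖z - u₁‖ :=
    (neg_le_abs _).trans (abs_real_inner_le_norm _ _)
  rw [← neg_sub z u₁, inner_neg_right, inner_add_left, real_inner_smul_left] at h2
  rw [inner_sub_left] at h3
  have h5 : η * ‖z - u₁‖ ≤ (l + ε) * ‖z - u₂‖ := by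
    rcases (norm_nonneg (z - u₁)).eq_or_lt with h0 | h0
    · rw [← h0, mul_zero]; positivity
    · refine le_of_mul_le_mul_right ?_ h0
      nlinarith [mul_le_mul_of_nonneg_left h4 hε.le]
  have h6 : ‖u₁ - u₂‖ ≤ ‖z - u₁‖ + ‖z - u₂‖ := by
    rw [norm_sub_rev z u₁]
    exact norm_sub_le_norm_sub_add_norm_sub _ _ _
  rw [norm_sub_rev] at hzδ
  have h7 : (η + l + ε) * ‖z - u₂‖ ≤ (η + l + ε) * δ :=
    mul_le_mul_of_nonneg_left hzδ (by positivity)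
  nlinarith [mul_le_mul_of_nonneg_left h6 hη.le]

end VariationalInequality

/-- Lemma 3.1: unique solvability of the time-dependent parameterized quasi-variational
inequality under strong pseudomonotonicity, Lipschitz continuity and the smallness
condition `2 l_K² (l_G √(l_G²+η_G²) + l_G² + η_G²) < η_G²`. -/
theorem pqvi_unique_solution
    {H₁ H₂ : Type*} [NormedAddCommGroup H₁] [InnerProductSpace ℝ H₁] [CompleteSpace H₁]
    [NormedAddCommGroup H₂] [InnerProductSpace ℝ H₂] [CompleteSpace H₂]
    (T : ℝ) (hT : 0 < T) (q : ℝ) (hq : q ∈ Ioc (0:ℝ) 1)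
    (Ω : Set H₂) (hΩne : Ω.Nonempty) (hΩcl : IsClosed Ω) (hΩcv : Convex ℝ Ω)
    (K : H₂ → Set H₂)
    (hK : ∀ u ∈ Ω, (K u).Nonempty ∧ IsClosed (K u) ∧ Convex ℝ (K u) ∧ K u ⊆ Ω)
    (G : ℝ → H₁ → H₂ → H₂) (lG ηG : ℝ) (hlG : 0 < lG) (hηG : 0 < ηG)
    -- (H₁): Lipschitz continuity of G
    (hGLip : ∀ s₁ ∈ Icc (0:ℝ) T, ∀ s₂ ∈ Icc (0:ℝ) T, ∀ (x₁ x₂ : H₁), ∀ u₁ ∈ Ω, ∀ u₂ ∈ Ω,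
      ‖G s₂ x₂ u₂ - G s₁ x₁ u₁‖ ≤ lG * (|s₂ - s₁| + ‖x₂ - x₁‖ + ‖u₂ - u₁‖))
    -- (H₁): strong pseudomonotonicity of G in its third argument on K(u)
    (hGpm : ∀ s ∈ Icc (0:ℝ) T, ∀ (x : H₁), ∀ u ∈ Ω, ∀ u₁ ∈ K u, ∀ u₂ ∈ K u,
      0 ≤ ⟪G s x u₂, u₁ - u₂⟫ → ηG * ‖u₁ - u₂‖ ^ 2 ≤ ⟪G s x u₁, u₁ - u₂⟫)
    -- (H₂): Lipschitz dependence of the projection on the parameter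
    (lK : ℝ) (hlK : 0 ≤ lK)
    (hKproj : ∀ u₁ ∈ Ω, ∀ u₂ ∈ Ω, ∀ ϖ : H₂,
      ‖proj (K u₂) ϖ - proj (K u₁) ϖ‖ ≤ lK * ‖u₂ - u₁‖)
    -- smallness condition (3.1)
    (hsmall : 2 * lK ^ 2 * (lG * Real.sqrt (lG ^ 2 + ηG ^ 2) + lG ^ 2 + ηG ^ 2) < ηG ^ 2)
    (s : ℝ) (hs : s ∈ Icc (0:ℝ) T) (x : H₁) :
    ∃! u : H₂, u ∈ Ω ∧ u ∈ K u ∧ ∀ v ∈ K u, 0 ≤ ⟪G s x u, v - u⟫ := by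
  have hLip : ∀ u ∈ Ω, ∀ v ∈ Ω, ‖G s x v - G s x u‖ ≤ lG * ‖v - u‖ := by
    intro u hu v hv
    simpa using hGLip s hs s hs x x u hu v hv
  have hsol : ∀ w : Ω, ∃ u ∈ K w, ∀ v ∈ K w, 0 ≤ ⟪G s x u, v - u⟫ := by
    intro w
    obtain ⟨h1, h2, h3, h4⟩ := hK w w.2
    exact exists_vi_solution h1 h2 h3 (G s x) hlG hηG
      (fun u hu v hv => hLip u (h4 hu) v (h4 hv)) (hGpm s hs x w w.2)
  have hlt : lK * (ηG + lG) < ηG := by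
    refine lt_of_pow_lt_pow_left₀ 2 hηG.le (lt_of_le_of_lt ?_ hsmall)
    have h1 : 0 ≤ lG * Real.sqrt (lG ^ 2 + ηG ^ 2) := by positivity
    have h2 : (ηG + lG) ^ 2 ≤ 2 * (lG * Real.sqrt (lG ^ 2 + ηG ^ 2) + lG ^ 2 + ηG ^ 2) := by
      nlinarith [sq_nonneg (ηG - lG)]
    nlinarith [mul_le_mul_of_nonneg_left h2 (sq_nonneg lK)]
  obtain ⟨ε, hε, hεlt⟩ : ∃ ε : ℝ, 0 < ε ∧ (ηG + lG + ε) * lK < ηG := by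
    refine ⟨(ηG - lK * (ηG + lG)) / (lK + 1), div_pos (by linarith) (by linarith), ?_⟩
    have : (ηG - lK * (ηG + lG)) / (lK + 1) * lK < ηG - lK * (ηG + lG) := by
      rw [div_mul_eq_mul_div, div_lt_iff₀ (by linarith)]
      nlinarith
    nlinarith
  have hest : ∀ w₁ ∈ Ω, ∀ w₂ ∈ Ω, ∀ u₁ ∈ K w₁, ∀ u₂ ∈ K w₂,
      (∀ v ∈ K w₁, 0 ≤ ⟪G s x u₁, v - u₁⟫) → (∀ v ∈ K w₂, 0 ≤ ⟪G s x u₂, v - u₂⟫) →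
      ‖u₁ - u₂‖ ≤ (ηG + lG + ε) * lK / ηG * ‖w₁ - w₂‖ := by
    intro w₁ hw₁ w₂ hw₂ u₁ hu₁ u₂ hu₂ h1 h2
    obtain ⟨-, a2, a3, a4⟩ := hK w₁ hw₁
    obtain ⟨-, b2, b3, b4⟩ := hK w₂ hw₂
    have h := solution_lipschitz a2 a3 b2 b3 (G s x) hlG hηG hε
      (fun u hu v hv => hLip u (b4 hu) v (a4 hv)) (hGpm s hs x w₁ hw₁)
      (hKproj w₁ hw₁ w₂ hw₂) hu₁ h1 hu₂ h2
    rw [div_mul_eq_mul_div, le_div_iff₀ hηG, norm_sub_rev w₁ w₂]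
    linarith
  have hk0 : 0 ≤ (ηG + lG + ε) * lK / ηG := by positivity
  have hk1 : (ηG + lG + ε) * lK / ηG < 1 := (div_lt_one hηG).2 hεlt
  choose S hSmem hSvi using hsol
  have hSΩ : ∀ w : Ω, S w ∈ Ω := fun w => (hK w w.2).2.2.2 (hSmem w)
  have hcontr : ContractingWith ⟨_, hk0⟩ (fun w : Ω => (⟨S w, hSΩ w⟩ : Ω)) := by
    refine ⟨by exact_mod_cast hk1, LipschitzWith.of_dist_le_mul fun w₁ w₂ => ?_⟩
    rw [Subtype.dist_eq, Subtype.dist_eq, dist_eq_norm, dist_eq_norm]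
    exact hest w₁ w₁.2 w₂ w₂.2 _ (hSmem w₁) _ (hSmem w₂) (hSvi w₁) (hSvi w₂)
  have : Nonempty Ω := hΩne.to_subtype
  have : CompleteSpace Ω := hΩcl.completeSpace_coe
  have hfix := hcontr.fixedPoint_isFixedPt
  set w := ContractingWith.fixedPoint _ hcontr
  have hw : S w = w := congrArg Subtype.val hfix
  have hmem := hSmem w
  have hvi := hSvi w
  rw [hw] at hmem hvi
  refine ⟨w, ⟨w.2, hmem, hvi⟩, ?_⟩
  rintro u ⟨huΩ, huK, huv⟩
  have h := hest u huΩ w w.2 u huK w hmem huv hvi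
  have h0 : ‖u - w‖ = 0 := by nlinarith [norm_nonneg (u - (w : H₂))]
  exact sub_eq_zero.1 (norm_eq_zero.1 h0)
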